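/- Let K be a field, n ≥ 1, I ⊆ {1,…,n}, i ∈ I, d ≥ 1 an integer, and σ = σ_{I,i} the blow-up chart substitution. Let f ∈ K[X_1,…,X_n] satisfy: f lies in the d-th power of the ideal generated by {X_j : j ∈ I}, and f has a nonzero coefficient at some monomial of total degree d (so ord_0 f = d, and d equals the order of f along the centre C = {X_j = 0 : j ∈ I}). Let g be the polynomial with σ(f) = X_i^d·g. Then for every point c ∈ K^n with c_i = 0 and c_j = 0 for all j ∉ I, one has ord_c g ≤ d. -/

import Mathlib

open MvPolynomial

/-- `ord_c f ≥ m`: `f` lies in the `m`-th power of the maximal ideal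
`(X₁ - c₁, …, X_n - c_n)` at the point `c`. -/
def ordGe {K : Type*} [CommRing K] {n : ℕ} (c : Fin n → K)
    (f : MvPolynomial (Fin n) K) (m : ℕ) : Prop :=
  f ∈ (Ideal.span (Set.range fun j : Fin n => X j - C (c j))) ^ m

/-! The substitution `σ_{I,i}` sends `X^e` to `X^e` times the power of `X_i` with exponent
`∑ j ∈ I \ {i}, e_j`, so it only relabels monomials, injectively. Restricted to the fibre
`{X_i = 0, X_j = 0 for j ∉ I}` over the origin, the strict transform `g` therefore keeps only
monomials of degree at most `d`, and each degree-`d` monomial of `f`, which involves only the `X_j`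
with `j ∈ I`, survives there with the variable `X_i` set to `1`. So the restriction is a nonzero
polynomial of degree at most `d`, which has order at most `d` at every point, whereas restricting to
the fibre can only raise the order. -/

section LocalOrder

variable {ι κ R : Type*}

theorem totalDegree_bind₁_le [CommSemiring R] {q : ι → MvPolynomial κ R} {k : ℕ}
    (hq : ∀ j, (q j).totalDegree ≤ k) (p : MvPolynomial ι R) :
    (bind₁ q p).totalDegree ≤ p.totalDegree * k := by
  rw [bind₁, aeval_def, eval₂_eq]
  refine totalDegree_finsetSum_le fun m hm => ?_
  rw [algebraMap_eq, ← smul_eq_C_mul]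
  calc (coeff m p • ∏ j ∈ m.support, q j ^ m j).totalDegree
      ≤ (∏ j ∈ m.support, q j ^ m j).totalDegree := totalDegree_smul_le _ _
    _ ≤ ∑ j ∈ m.support, (q j ^ m j).totalDegree := totalDegree_finsetProd _ _
    _ ≤ ∑ j ∈ m.support, m j * k := Finset.sum_le_sum fun j _ =>
        (totalDegree_pow _ _).trans (Nat.mul_le_mul_left _ (hq j))
    _ = m.degree * k := (Finset.sum_mul _ _ _).symm
    _ ≤ p.totalDegree * k := Nat.mul_le_mul_right _ (le_totalDegree hm)

theorem support_subset_of_mem_span_X_pow [CommSemiring R] {s : Set ι} {f : MvPolynomial ι R}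
    {e : ι →₀ ℕ} (hf : f ∈ Ideal.span (X '' s : Set (MvPolynomial ι R)) ^ e.degree)
    (he : coeff e f ≠ 0) : ↑e.support ⊆ s := by
  rw [Ideal.span, Submodule.span_pow, Finsupp.image_pow_eq_finsuppProd_image] at hf
  have hf' : f ∈ Ideal.span ((fun m => monomial m (1 : R)) ''
      {m : ι →₀ ℕ | m.degree = e.degree ∧ ↑m.support ⊆ s}) := by
    simpa only [monomial_eq, C_1, one_mul] using hf
  obtain ⟨m, ⟨hdeg, hsupp⟩, hle⟩ := mem_ideal_span_monomial_image.mp hf' e (mem_support_iff.mpr he)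
  obtain ⟨r, rfl⟩ := exists_add_of_le hle
  have hr : r = 0 := by
    rw [map_add] at hdeg
    exact (Finsupp.degree_eq_zero_iff r).mp (by omega)
  rwa [hr, add_zero]

variable [CommRing R]

/-- The ideal `(X_j - c_j)_j` of the point `c` of affine space; the order of `f` at `c` is at least
`m` when `f` lies in the `m`-th power of this ideal. -/
noncomputable def pointIdeal (c : ι → R) : Ideal (MvPolynomial ι R) :=
  Ideal.span (Set.range fun j => X j - C (c j))

theorem eq_zero_of_mem_pointIdeal_pow {c : ι → R} {p : MvPolynomial ι R} {m : ℕ}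
    (hp : p ∈ pointIdeal c ^ m) (hdeg : p.totalDegree < m) : p = 0 := by
  let τ : MvPolynomial ι R →ₐ[R] MvPolynomial ι R := bind₁ fun j => X j + C (c j)
  have hτ_inj : Function.Injective τ := by
    refine Function.LeftInverse.injective (g := bind₁ fun j => X j - C (c j)) fun q => ?_
    rw [bind₁_bind₁]
    simp
  have hτ_mem : τ p ∈ idealOfVars ι R ^ m := by
    have hmap := Ideal.mem_map_of_mem τ hp
    rw [Ideal.map_pow, pointIdeal, Ideal.map_span, ← Set.range_comp] at hmap
    simpa [τ, Function.comp_def] using hmap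
  have hτ_deg : (τ p).totalDegree < m := by
    refine ((totalDegree_bind₁_le (k := 1) (fun j => ?_) p).trans_eq (mul_one _)).trans_lt hdeg
    exact (totalDegree_add _ _).trans
      (max_le ((totalDegree_monomial_le _ _).trans (by simp)) (by simp))
  refine (map_eq_zero_iff τ hτ_inj).mp (support_eq_empty.mp ?_)
  refine Finset.eq_empty_of_forall_notMem fun e he => ?_
  have hle : e.degree ≤ (τ p).totalDegree := le_totalDegree he
  have hge : m ≤ e.degree := (mem_pow_idealOfVars_iff m (τ p)).mp hτ_mem e he
  omega

theorem killCompl_mem_pointIdeal_pow {v : κ → ι} (hv : Function.Injective v) {c : ι → R}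
    (hc : ∀ j ∉ Set.range v, c j = 0) {p : MvPolynomial ι R} {m : ℕ}
    (hp : p ∈ pointIdeal c ^ m) : killCompl hv p ∈ pointIdeal (c ∘ v) ^ m := by
  have hmap := Ideal.mem_map_of_mem (killCompl hv) hp
  rw [Ideal.map_pow] at hmap
  refine Ideal.pow_right_mono ?_ m hmap
  rw [pointIdeal, Ideal.map_span, Ideal.span_le]
  rintro _ ⟨_, ⟨j, rfl⟩, rfl⟩
  rw [map_sub, killCompl_C]
  by_cases hj : j ∈ Set.range v
  · obtain ⟨k, rfl⟩ := hj
    rw [← rename_X v k, killCompl_rename_app]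
    exact Ideal.subset_span ⟨k, rfl⟩
  · simp [killCompl, hj, hc j hj]

end LocalOrder

section BlowupChart

variable {ι : Type*} [DecidableEq ι] (I : Finset ι) (i : ι)

/-- The substitution `σ_{I,i}` giving the `i`-th chart of the blowing-up with centre
`{X_j = 0 : j ∈ I}`. -/
noncomputable def blowupChart (R : Type*) [CommSemiring R] :
    MvPolynomial ι R →ₐ[R] MvPolynomial ι R :=
  aeval fun j => if j ∈ I.erase i then X i * X j else X j

/-- The action of `σ_{I,i}` on exponents of monomials. -/
noncomputable def blowupExponent (e : ι →₀ ℕ) : ι →₀ ℕ :=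
  e + Finsupp.single i (∑ j ∈ I.erase i, e j)

/-- The restriction of polynomials on the chart to the fibre `{X_i = 0, X_j = 0 for j ∉ I}` of the
blowing-up over the origin, an affine space with coordinates `X_j` for `j ∈ I \ {i}`. -/
noncomputable def restrictFiber (R : Type*) [CommSemiring R] :
    MvPolynomial ι R →ₐ[R] MvPolynomial (I.erase i) R :=
  killCompl Subtype.val_injective

variable {I i}

theorem blowupExponent_apply_of_ne {j : ι} (hj : j ≠ i) (e : ι →₀ ℕ) :
    blowupExponent I i e j = e j := by
  simp [blowupExponent, hj]

theorem blowupExponent_apply_self (e : ι →₀ ℕ) :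
    blowupExponent I i e i = e i + ∑ j ∈ I.erase i, e j := by
  simp [blowupExponent]

theorem blowupExponent_injective : Function.Injective (blowupExponent I i) := by
  intro e e' h
  have hne : ∀ j ≠ i, e j = e' j := fun j hj => by
    rw [← blowupExponent_apply_of_ne hj e, h, blowupExponent_apply_of_ne hj]
  have hsum : ∑ j ∈ I.erase i, e j = ∑ j ∈ I.erase i, e' j :=
    Finset.sum_congr rfl fun j hj => hne j (Finset.ne_of_mem_erase hj)
  have hself := DFunLike.congr_fun h i
  rw [blowupExponent_apply_self, blowupExponent_apply_self, hsum] at hself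
  ext j
  obtain rfl | hj := eq_or_ne j i
  · exact Nat.add_right_cancel hself
  · exact hne j hj

theorem blowupExponent_eq_mapDomain_add_single {e : ι →₀ ℕ} (he : e.support ⊆ insert i I) :
    blowupExponent I i e =
      (e.subtypeDomain (· ∈ I.erase i)).mapDomain Subtype.val + Finsupp.single i e.degree := by
  have hval : Function.Injective (Subtype.val : {j // j ∈ I.erase i} → ι) :=
    Subtype.val_injective
  have hdeg : e.degree = e i + ∑ j ∈ I.erase i, e j := by
    rw [← Finset.erase_insert_eq_erase, Finset.add_sum_erase _ _ (Finset.mem_insert_self i I)]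
    exact Finset.sum_subset he fun j _ hj => Finsupp.notMem_support_iff.mp hj
  ext j
  rw [Finsupp.add_apply]
  by_cases hj : j ∈ I.erase i
  · have hji : j ≠ i := Finset.ne_of_mem_erase hj
    rw [blowupExponent_apply_of_ne hji, Finsupp.single_eq_of_ne hji, add_zero]
    exact (Finsupp.mapDomain_apply hval (e.subtypeDomain _) ⟨j, hj⟩).symm
  · rw [Finsupp.mapDomain_of_notMem_range _ _ (by simpa using hj), zero_add]
    obtain rfl | hji := eq_or_ne j i
    · rw [blowupExponent_apply_self, Finsupp.single_eq_same, hdeg]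
    · rw [blowupExponent_apply_of_ne hji, Finsupp.single_eq_of_ne hji]
      refine Finsupp.notMem_support_iff.mp fun h => hj (Finset.mem_erase.mpr ⟨hji, ?_⟩)
      exact Finset.mem_of_mem_insert_of_ne (he h) hji

variable {R : Type*} [CommSemiring R]

theorem blowupChart_X (j : ι) : blowupChart I i R (X j) =
    if j = i then X i else if j ∈ I then X i * X j else X j := by
  rw [blowupChart, aeval_X]
  obtain rfl | hj := eq_or_ne j i <;> simp [*]

theorem blowupChart_monomial (e : ι →₀ ℕ) (a : R) :
    blowupChart I i R (monomial e a) = monomial (blowupExponent I i e) a := by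
  have hfactor : ∀ j, (if j ∈ I.erase i then X i * X j else X j : MvPolynomial ι R) =
      X j * if j ∈ I.erase i then X i else 1 := fun j => by
    rw [mul_ite, mul_one, mul_comm]
  have hexc : (e.prod fun j k => (if j ∈ I.erase i then X i else 1 : MvPolynomial ι R) ^ k) =
      X i ^ ∑ j ∈ I.erase i, e j := by
    rw [Finsupp.prod_of_support_subset e (s := e.support ∪ I.erase i) Finset.subset_union_left _
      fun _ _ => pow_zero _]
    simp only [ite_pow, one_pow]
    rw [Finset.prod_ite_mem, Finset.union_inter_cancel_right, Finset.prod_pow_eq_pow_sum]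
  calc blowupChart I i R (monomial e a)
      = C a * ((e.prod fun j k => X j ^ k) * X i ^ ∑ j ∈ I.erase i, e j) := by
        simp only [blowupChart, aeval_monomial, algebraMap_eq, hfactor, mul_pow, Finsupp.prod_mul,
          hexc]
    _ = monomial (blowupExponent I i e) a := by
        rw [← mul_assoc, ← monomial_eq, X_pow_eq_monomial, monomial_mul, mul_one, blowupExponent]

theorem blowupChart_eq_sum (f : MvPolynomial ι R) :
    blowupChart I i R f = ∑ e ∈ f.support, monomial (blowupExponent I i e) (coeff e f) := by
  conv_lhs => rw [f.as_sum, map_sum]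
  exact Finset.sum_congr rfl fun e _ => blowupChart_monomial e _

theorem coeff_blowupExponent_blowupChart (e : ι →₀ ℕ) (f : MvPolynomial ι R) :
    coeff (blowupExponent I i e) (blowupChart I i R f) = coeff e f := by
  simp +contextual [blowupChart_eq_sum, coeff_sum, coeff_monomial, blowupExponent_injective.eq_iff,
    eq_comm]

theorem exists_blowupExponent_eq_of_coeff_blowupChart_ne_zero {m : ι →₀ ℕ} {f : MvPolynomial ι R}
    (hm : coeff m (blowupChart I i R f) ≠ 0) : ∃ e, blowupExponent I i e = m := by
  rw [blowupChart_eq_sum, coeff_sum] at hm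
  obtain ⟨e, -, he⟩ := Finset.exists_ne_zero_of_sum_ne_zero hm
  exact ⟨e, by_contra fun h => he (by rw [coeff_monomial, if_neg h])⟩

variable {d : ℕ} {f g : MvPolynomial ι R}

theorem coeff_restrictFiber_of_blowupChart_eq (hg : blowupChart I i R f = X i ^ d * g)
    (m : I.erase i →₀ ℕ) :
    coeff m (restrictFiber I i R g) =
      coeff (m.mapDomain Subtype.val + Finsupp.single i d) (blowupChart I i R f) := by
  rw [restrictFiber, coeff_killCompl, hg, X_pow_eq_monomial, add_comm, coeff_monomial_mul, one_mul]

theorem totalDegree_restrictFiber_le (hg : blowupChart I i R f = X i ^ d * g) :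
    (restrictFiber I i R g).totalDegree ≤ d := by
  refine Finset.sup_le fun m hm => ?_
  rw [mem_support_iff, coeff_restrictFiber_of_blowupChart_eq hg] at hm
  obtain ⟨e, he⟩ := exists_blowupExponent_eq_of_coeff_blowupChart_ne_zero hm
  have he_fiber : ∀ j : I.erase i, e j = m j := fun j => by
    have hji : (j : ι) ≠ i := Finset.ne_of_mem_erase j.2
    rw [← blowupExponent_apply_of_ne hji, he, Finsupp.add_apply,
      Finsupp.mapDomain_apply Subtype.val_injective, Finsupp.single_eq_of_ne hji, add_zero]
  have he_self : e i + ∑ j ∈ I.erase i, e j = d := by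
    rw [← blowupExponent_apply_self, he, Finsupp.add_apply,
      Finsupp.mapDomain_of_notMem_range _ _ (by simp), Finsupp.single_eq_same, zero_add]
  calc m.degree = ∑ j ∈ I.erase i, e j := by
        rw [Finsupp.degree_eq_sum, ← Finset.sum_coe_sort (I.erase i)]
        exact Finset.sum_congr rfl fun j _ => (he_fiber j).symm
    _ ≤ d := he_self ▸ Nat.le_add_left _ _

theorem coeff_restrictFiber_subtypeDomain {e : ι →₀ ℕ} (he : e.support ⊆ insert i I)
    (hg : blowupChart I i R f = X i ^ e.degree * g) :
    coeff (e.subtypeDomain (· ∈ I.erase i)) (restrictFiber I i R g) = coeff e f := by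
  rw [coeff_restrictFiber_of_blowupChart_eq hg, ← blowupExponent_eq_mapDomain_add_single he,
    coeff_blowupExponent_blowupChart]

end BlowupChart

theorem stmt_7_general {ι R : Type*} [DecidableEq ι] [CommRing R] {I : Finset ι} {i : ι} {d : ℕ}
    {f g : MvPolynomial ι R}
    (hf : f ∈ Ideal.span (X '' (I : Set ι) : Set (MvPolynomial ι R)) ^ d)
    (hf' : ∃ e : ι →₀ ℕ, e.degree = d ∧ coeff e f ≠ 0)
    (hg : blowupChart I i R f = X i ^ d * g) {c : ι → R} (hci : c i = 0)
    (hc : ∀ j ∉ I, c j = 0) : g ∉ pointIdeal c ^ (d + 1) := by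
  intro hord
  obtain ⟨e, rfl, hne⟩ := hf'
  have hc_fiber : ∀ j ∉ Set.range (Subtype.val : I.erase i → ι), c j = 0 := by
    intro j hj
    obtain rfl | hji := eq_or_ne j i
    · exact hci
    · exact hc j fun hjI => hj ⟨⟨j, Finset.mem_erase.mpr ⟨hji, hjI⟩⟩, rfl⟩
  have hzero : restrictFiber I i R g = 0 :=
    eq_zero_of_mem_pointIdeal_pow (killCompl_mem_pointIdeal_pow _ hc_fiber hord)
      (Nat.lt_succ_of_le (totalDegree_restrictFiber_le hg))
  have hsupp : e.support ⊆ insert i I :=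
    (Finset.coe_subset.mp (support_subset_of_mem_span_X_pow hf hne)).trans
      (Finset.subset_insert i I)
  exact hne (by rw [← coeff_restrictFiber_subtypeDomain hsupp hg, hzero, coeff_zero])

/-- **Infinitesimal upper-semicontinuity of the order under an admissible
blowing-up (Examples 1.13(1) of Bierstone–Milman, "Desingularization
algorithms I"): `μ_{a'}(f') ≤ μ_a(f)`.**
Suppose `f` lies in the `d`-th power of the ideal `(X_j : j ∈ I)` and has
a nonzero coefficient in some monomial of total degree `d` (so
`ord_0 f = d = μ_C(f)`).  Let `g` be the strict transform,
`σ(f) = X_i^d · g`, where `σ = σ_{I,i}` is the blow-up chart substitution.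
Then at every point `c` of the exceptional hypersurface `{X_i = 0}` lying
over the origin (`c_i = 0` and `c_j = 0` for `j ∉ I`), `ord_c g ≤ d`,
i.e. not `ord_c g ≥ d + 1`. -/
theorem stmt_7 {K : Type*} [Field K] {n : ℕ} (hn : 1 ≤ n)
    (I : Finset (Fin n)) (i : Fin n) (hi : i ∈ I) (d : ℕ) (hd : 1 ≤ d)
    (σ : MvPolynomial (Fin n) K →ₐ[K] MvPolynomial (Fin n) K)
    (hσ : ∀ j : Fin n, σ (X j) =
      if j = i then X i else if j ∈ I then X i * X j else X j)
    (f : MvPolynomial (Fin n) K)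
    (hf : f ∈ (Ideal.span (X '' (I : Set (Fin n)) :
      Set (MvPolynomial (Fin n) K))) ^ d)
    (hf' : ∃ e : Fin n →₀ ℕ, (∑ j, e j) = d ∧ MvPolynomial.coeff e f ≠ 0)
    (g : MvPolynomial (Fin n) K) (hg : σ f = X i ^ d * g) :
    ∀ c : Fin n → K, c i = 0 → (∀ j : Fin n, j ∉ I → c j = 0) →
      ¬ ordGe c g (d + 1) := by
  obtain rfl : σ = blowupChart I i K := algHom_ext fun j => (hσ j).trans (blowupChart_X j).symm
  exact fun _ => stmt_7_general hf (by simpa only [Finsupp.degree_eq_sum] using hf') hg
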